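/- (Relative Poincaré lemma with vanishing order, from the proof of the Darboux–Weinstein theorem.) Split ℝ^d = ℝ^k_x × ℝ^{d−k}_y. Let τ be a smooth map from a neighborhood of 0 in ℝ^d, star-shaped in the x-variable (i.e. (tx,y) belongs to it whenever (x,y) does and t ∈ [0,1]), into the alternating bilinear forms on ℝ^d. Assume τ is closed, i.e. Dτ(z)[u](v,w) + Dτ(z)[v](w,u) + Dτ(z)[w](u,v) = 0 for all z in the neighborhood and u,v,w ∈ ℝ^d, and assume there are α ≥ 1 and C > 0 with ‖τ(x,y)‖ ≤ C|x|^α on the neighborhood. Then there exist a smooth map σ from (possibly a smaller such) neighborhood of 0 into the linear forms on ℝ^d and a constant C' > 0 such that for all z = (x,y): Dσ(z)[u](v) − Dσ(z)[v](u) = τ(z)(u,v) for all u,v ∈ ℝ^d (i.e. dσ = τ), and ‖σ(x,y)‖ ≤ C'|x|^{α+1}. -/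

import Mathlib

noncomputable section

/-!
Let `q` be linear, let `h_t = (1 - t) q + t id`, and let `v` be the velocity of `h_t`. For a closed
2-form `τ`, Cartan's formula gives `d/dt h_t^* τ = d (h_t^* ι_v τ)`, so `σ = ∫₀¹ h_t^* ι_v τ dt`
satisfies `dσ = τ - q^* τ`. For `q (x, y) = (0, y)` the term `q^* τ` vanishes because `τ` does on
`x = 0`, and the velocity `v = (x, 0)` contributes the extra factor `|x|` to the bound on `σ`.
-/

open Function Set Filter Topology MeasureTheory AffineMap
open scoped Interval

section ParametricIntegral

variable {E G : Type*} [NormedAddCommGroup E] [NormedSpace ℝ E] [NormedAddCommGroup G]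
  [NormedSpace ℝ G] {a b : ℝ} {s : Set E}

theorem exists_eventually_forall_norm_lt_of_continuousOn {X Y F : Type*} [TopologicalSpace X]
    [TopologicalSpace Y] [SeminormedAddCommGroup F] {s : Set X} {K : Set Y} (hK : IsCompact K)
    {f : X → Y → F} (hf : ContinuousOn (uncurry f) (s ×ˢ K)) {x : X} (hs : s ∈ 𝓝 x) :
    ∃ M, ∀ᶠ y in 𝓝 x, ∀ t ∈ K, ‖f y t‖ < M := by
  have hx : x ∈ s := mem_of_mem_nhds hs
  obtain ⟨M, hM⟩ := hK.exists_bound_of_continuousOn (hf.uncurry_left x hx)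
  have hnear : ∀ᶠ y in 𝓝 x, ∀ t ∈ K, y ∈ s → t ∈ K → ‖f y t‖ < M + 1 := by
    refine hK.eventually_forall_of_forall_eventually fun t ht => ?_
    have hlt : ∀ᶠ p in 𝓝[s ×ˢ K] (x, t), ‖uncurry f p‖ < M + 1 :=
      (hf (x, t) ⟨hx, ht⟩).norm.eventually_lt_const ((hM t ht).trans_lt (lt_add_one M))
    filter_upwards [eventually_nhdsWithin_iff.1 hlt] with p hp hps hpK using hp ⟨hps, hpK⟩
  refine ⟨M + 1, ?_⟩
  filter_upwards [hnear, hs] with y hy hys t ht using hy t ht hys ht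

theorem continuousOn_intervalIntegral_of_continuousOn {X : Type*} [TopologicalSpace X]
    [FirstCountableTopology X] {s : Set X} (hs : IsOpen s) {f : X → ℝ → G}
    (hf : ContinuousOn (uncurry f) (s ×ˢ [[a, b]])) :
    ContinuousOn (fun x => ∫ t in a..b, f x t) s := by
  intro x hx
  have hsx : s ∈ 𝓝 x := hs.mem_nhds hx
  obtain ⟨M, hM⟩ := exists_eventually_forall_norm_lt_of_continuousOn isCompact_uIcc hf hsx
  refine (intervalIntegral.continuousAt_of_dominated_interval (bound := fun _ => M)
    ?_ ?_ intervalIntegrable_const ?_).continuousWithinAt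
  · filter_upwards [hsx] with y hy
    exact ((hf.uncurry_left y hy).mono uIoc_subset_uIcc).aestronglyMeasurable measurableSet_uIoc
  · filter_upwards [hM] with y hy
    exact .of_forall fun t ht => (hy t (uIoc_subset_uIcc ht)).le
  · refine .of_forall fun t ht => ContinuousOn.continuousAt ?_ hsx
    exact hf.uncurry_right t (uIoc_subset_uIcc ht)

theorem hasFDerivAt_intervalIntegral_of_continuousOn (hs : IsOpen s) {f : E → ℝ → G}
    {f' : E → ℝ → E →L[ℝ] G} (hf : ∀ x ∈ s, ContinuousOn (f x) [[a, b]])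
    (hf' : ContinuousOn (uncurry f') (s ×ˢ [[a, b]]))
    (hderiv : ∀ x ∈ s, ∀ t ∈ [[a, b]], HasFDerivAt (f · t) (f' x t) x) {x : E} (hx : x ∈ s) :
    HasFDerivAt (fun y => ∫ t in a..b, f y t) (∫ t in a..b, f' x t) x := by
  have hsx : s ∈ 𝓝 x := hs.mem_nhds hx
  obtain ⟨M, hM⟩ := exists_eventually_forall_norm_lt_of_continuousOn isCompact_uIcc hf' hsx
  refine intervalIntegral.hasFDerivAt_integral_of_dominated_of_fderiv_le (bound := fun _ => M)
    (inter_mem hsx hM) ?_ (hf x hx).intervalIntegrable ?_ ?_ intervalIntegrable_const ?_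
  · filter_upwards [hsx] with y hy
    exact ((hf y hy).mono uIoc_subset_uIcc).aestronglyMeasurable measurableSet_uIoc
  · exact ((hf'.uncurry_left x hx).mono uIoc_subset_uIcc).aestronglyMeasurable measurableSet_uIoc
  · exact .of_forall fun t ht y hy => (hy.2 t (uIoc_subset_uIcc ht)).le
  · exact .of_forall fun t ht y hy => hderiv y hy.1 t (uIoc_subset_uIcc ht)

set_option maxSynthPendingDepth 4 in
theorem intervalIntegral_curryLeft [CompleteSpace G] {m : ℕ} (p : ℝ → E [×(m + 1)]→L[ℝ] G) :
    ∫ t in a..b, (p t).curryLeft = (∫ t in a..b, p t).curryLeft :=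
  (continuousMultilinearCurryLeftEquiv ℝ (fun _ : Fin (m + 1) => E) G).toLinearIsometry
    |>.intervalIntegral_comp_comm p

theorem hasFTaylorSeriesUpToOn_intervalIntegral [CompleteSpace G] (hs : IsOpen s)
    {n : WithTop ℕ∞} {f : E → ℝ → G} {p : E → ℝ → FormalMultilinearSeries ℝ E G}
    (hp : ∀ t ∈ [[a, b]], HasFTaylorSeriesUpToOn n (f · t) (p · t) s)
    (hcont : ∀ m : ℕ, m ≤ n → ContinuousOn (uncurry fun x t => p x t m) (s ×ˢ [[a, b]])) :
    HasFTaylorSeriesUpToOn n (fun x => ∫ t in a..b, f x t)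
      (fun x m => ∫ t in a..b, p x t m) s := by
  refine ⟨fun x hx => ?_, fun m hm x hx => ?_, fun m hm =>
    continuousOn_intervalIntegral_of_continuousOn hs (hcont m hm)⟩
  · rw [intervalIntegral.integral_congr fun t ht => ((hp t ht).zero_eq x hx).symm]
    exact ((continuousMultilinearCurryFin0 ℝ E G).toLinearIsometry.intervalIntegral_comp_comm
      fun t => p x t 0).symm
  · let curry := continuousMultilinearCurryLeftEquiv ℝ (fun _ : Fin (m + 1) => E) G
    have hderiv : HasFDerivAt (fun y => ∫ t in a..b, p y t m)
        (∫ t in a..b, (p x t (m + 1)).curryLeft) x :=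
      hasFDerivAt_intervalIntegral_of_continuousOn hs (f' := fun y t => (p y t (m + 1)).curryLeft)
        (fun y hy => (hcont m hm.le).uncurry_left y hy)
        (curry.continuous.comp_continuousOn
          (hcont (m + 1) (ENat.add_one_natCast_le_withTop_of_lt hm)))
        (fun y hy t ht => ((hp t ht).fderivWithin m hm y hy).hasFDerivAt (hs.mem_nhds hy)) hx
    exact (hderiv.congr_fderiv (intervalIntegral_curryLeft _)).hasFDerivWithinAt

theorem contDiffOn_intervalIntegral [CompleteSpace G] {n : ℕ∞} (hs : IsOpen s)
    {U : Set (E × ℝ)} (hU : IsOpen U) (hsU : s ×ˢ [[a, b]] ⊆ U) {f : E → ℝ → G}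
    (hf : ContDiffOn ℝ n (uncurry f) U) : ContDiffOn ℝ n (fun x => ∫ t in a..b, f x t) s := by
  have hp := hf.ftaylorSeriesWithin hU.uniqueDiffOn
  let slice (t : ℝ) : E →ᴬ[ℝ] E × ℝ :=
    (ContinuousAffineMap.id ℝ E).prod (ContinuousAffineMap.const ℝ E t)
  refine HasFTaylorSeriesUpToOn.contDiffOn (hasFTaylorSeriesUpToOn_intervalIntegral hs
    (fun t ht => (hp.comp_continuousAffineMap (slice t)).mono fun x hx => hsU ⟨hx, ht⟩) ?_)
  intro m hm
  have hcomp := (ContinuousMultilinearMap.compContinuousLinearMapL (F := G)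
    fun _ : Fin m => ContinuousLinearMap.inl ℝ E ℝ).continuous
  exact hcomp.comp_continuousOn ((hp.cont m hm).mono hsU)

theorem hasFDerivAt_slice {U : Set (E × ℝ)} (hU : IsOpen U) {f : E → ℝ → G}
    (hf : DifferentiableOn ℝ (uncurry f) U) {p : E × ℝ} (hp : p ∈ U) :
    HasFDerivAt (f · p.2) (fderiv ℝ (uncurry f) p ∘L .inl ℝ E ℝ) p.1 :=
  HasFDerivAt.comp p.1 (f := fun x => (x, p.2)) (g := uncurry f)
    (hf.differentiableAt (hU.mem_nhds hp)).hasFDerivAt (hasFDerivAt_prodMk_left p.1 p.2)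

theorem continuousOn_fderiv_slice {U : Set (E × ℝ)} (hU : IsOpen U) {f : E → ℝ → G}
    (hf : ContDiffOn ℝ 1 (uncurry f) U) :
    ContinuousOn (uncurry fun x t => fderiv ℝ (f · t) x) U :=
  ((hf.continuousOn_fderiv_of_isOpen hU le_rfl).clm_comp continuousOn_const).congr
    fun _ hp => (hasFDerivAt_slice hU (hf.differentiableOn one_ne_zero) hp).fderiv

theorem hasFDerivAt_intervalIntegral_of_contDiffOn (hs : IsOpen s) {U : Set (E × ℝ)}
    (hU : IsOpen U) (hsU : s ×ˢ [[a, b]] ⊆ U) {f : E → ℝ → G}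
    (hf : ContDiffOn ℝ 1 (uncurry f) U) {x : E} (hx : x ∈ s) :
    HasFDerivAt (fun y => ∫ t in a..b, f y t) (∫ t in a..b, fderiv ℝ (f · t) x) x :=
  hasFDerivAt_intervalIntegral_of_continuousOn hs (hf.continuousOn.mono hsU).uncurry_left
    ((continuousOn_fderiv_slice hU hf).mono hsU)
    (fun y hy t ht => (hasFDerivAt_slice hU (hf.differentiableOn one_ne_zero)
      (hsU ⟨hy, ht⟩ : (y, t) ∈ U)).differentiableAt.hasFDerivAt) hx

theorem intervalIntegral_apply_sub_swap {B : ℝ → E →L[ℝ] E →L[ℝ] G}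
    (hB : ContinuousOn B [[a, b]]) (u v : E) :
    (∫ t in a..b, B t) u v - (∫ t in a..b, B t) v u = ∫ t in a..b, (B t u v - B t v u) := by
  have hBu : ∀ u, ContinuousOn (fun t => B t u) [[a, b]] := fun u =>
    hB.clm_apply continuousOn_const
  have hBuv : ∀ u v, ContinuousOn (fun t => B t u v) [[a, b]] := fun u v =>
    (hBu u).clm_apply continuousOn_const
  have happly : ∀ u v, (∫ t in a..b, B t) u v = ∫ t in a..b, B t u v := fun u v => by
    rw [ContinuousLinearMap.intervalIntegral_apply hB.intervalIntegrable,
      ContinuousLinearMap.intervalIntegral_apply (hBu u).intervalIntegrable]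
  rw [happly, happly, intervalIntegral.integral_sub (hBuv u v).intervalIntegrable
    (hBuv v u).intervalIntegrable]

end ParametricIntegral

section HomotopyOperator

variable {E G : Type*} [NormedAddCommGroup E] [NormedSpace ℝ E] [NormedAddCommGroup G]
  [NormedSpace ℝ G] {q : E →L[ℝ] E} {τ : E → E →L[ℝ] E →L[ℝ] G} {t : ℝ} {z : E}

/-- The straight-line homotopy `(1 - t) q + t id` from the linear map `q` to the identity. -/
def lineHomotopy (q : E →L[ℝ] E) (t : ℝ) : E →L[ℝ] E :=
  lineMap q (.id ℝ E) t

theorem lineHomotopy_apply (q : E →L[ℝ] E) (t : ℝ) (z : E) :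
    lineHomotopy q t z = lineMap (q z) z t := by
  simp [lineHomotopy, lineMap_apply_module]

theorem lineHomotopy_zero (q : E →L[ℝ] E) : lineHomotopy q 0 = q :=
  lineMap_apply_zero q _

theorem lineHomotopy_one (q : E →L[ℝ] E) : lineHomotopy q 1 = .id ℝ E :=
  lineMap_apply_one q _

theorem hasDerivAt_lineHomotopy_apply (q : E →L[ℝ] E) (t : ℝ) (z : E) :
    HasDerivAt (fun t => lineHomotopy q t z) (z - q z) t := by
  simpa only [lineHomotopy_apply] using hasDerivAt_lineMap (a := q z) (b := z) (x := t)

theorem contDiff_lineHomotopy (q : E →L[ℝ] E) {n : WithTop ℕ∞} : ContDiff ℝ n (lineHomotopy q) := by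
  have hlineMap : lineHomotopy q = fun t : ℝ => (1 - t) • q + t • ContinuousLinearMap.id ℝ E :=
    funext fun t => lineMap_apply_module q _ t
  rw [hlineMap]
  fun_prop

theorem norm_lineHomotopy_le (hq : ‖q‖ ≤ 1) (ht : t ∈ Icc (0 : ℝ) 1) : ‖lineHomotopy q t‖ ≤ 1 := by
  have hmem : lineHomotopy q t ∈ Metric.closedBall 0 1 :=
    (convex_closedBall 0 1).lineMap_mem (mem_closedBall_zero_iff.2 hq)
      (mem_closedBall_zero_iff.2 ContinuousLinearMap.norm_id_le) ht
  exact mem_closedBall_zero_iff.1 hmem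

/-- The integrand `h_t^* (ι_v τ)` of the homotopy operator, where `h_t` is `lineHomotopy q t` and
`v = z - q z` is the velocity of the homotopy at `z`. -/
def homotopyIntegrand (q : E →L[ℝ] E) (τ : E → E →L[ℝ] E →L[ℝ] G) (z : E) (t : ℝ) : E →L[ℝ] G :=
  τ (lineHomotopy q t z) (z - q z) ∘L lineHomotopy q t

/-- The homotopy operator of the Poincaré lemma, taking the 2-form `τ` to the 1-form
`∫₀¹ h_t^* (ι_v τ) dt`. A form is encoded as a map into (nested) continuous linear maps. -/
def homotopyOperator (q : E →L[ℝ] E) (τ : E → E →L[ℝ] E →L[ℝ] G) (z : E) : E →L[ℝ] G :=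
  ∫ t in (0 : ℝ)..1, homotopyIntegrand q τ z t

theorem norm_homotopyOperator_le (hq : ‖q‖ ≤ 1) {M : ℝ}
    (hM : ∀ t ∈ Icc (0 : ℝ) 1, ‖τ (lineHomotopy q t z)‖ ≤ M) :
    ‖homotopyOperator q τ z‖ ≤ M * ‖z - q z‖ := by
  have hintegrand : ∀ t ∈ Ι (0 : ℝ) 1, ‖homotopyIntegrand q τ z t‖ ≤ M * ‖z - q z‖ := fun t ht =>
    have ht : t ∈ Icc (0 : ℝ) 1 := uIcc_of_le (zero_le_one' ℝ) ▸ uIoc_subset_uIcc ht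
    calc ‖homotopyIntegrand q τ z t‖
        ≤ ‖τ (lineHomotopy q t z) (z - q z)‖ * ‖lineHomotopy q t‖ :=
          ContinuousLinearMap.opNorm_comp_le _ _
      _ ≤ ‖τ (lineHomotopy q t z) (z - q z)‖ :=
          mul_le_of_le_one_right (norm_nonneg _) (norm_lineHomotopy_le hq ht)
      _ ≤ M * ‖z - q z‖ := (τ (lineHomotopy q t z)).le_of_opNorm_le (hM t ht) _
  simpa [homotopyOperator] using intervalIntegral.norm_integral_le_of_norm_le_const hintegrand

theorem contDiffOn_homotopyIntegrand {n : WithTop ℕ∞} {W : Set E} (hτ : ContDiffOn ℝ n τ W) :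
    ContDiffOn ℝ n (uncurry (homotopyIntegrand q τ)) {p | lineHomotopy q p.2 p.1 ∈ W} := by
  have hpath : ContDiff ℝ n fun p : E × ℝ => lineHomotopy q p.2 :=
    (contDiff_lineHomotopy q).comp contDiff_snd
  have hpoint : ContDiff ℝ n fun p : E × ℝ => lineHomotopy q p.2 p.1 :=
    hpath.clm_apply contDiff_fst
  have hdir : ContDiff ℝ n fun p : E × ℝ => p.1 - q p.1 := by fun_prop
  exact ((hτ.comp hpoint.contDiffOn fun p hp => hp).clm_apply hdir.contDiffOn).clm_comp
    hpath.contDiffOn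

theorem fderiv_homotopyIntegrand_apply (hτ : DifferentiableAt ℝ τ (lineHomotopy q t z)) (u v : E) :
    fderiv ℝ (homotopyIntegrand q τ · t) z u v =
      fderiv ℝ τ (lineHomotopy q t z) (lineHomotopy q t u) (z - q z) (lineHomotopy q t v)
        + τ (lineHomotopy q t z) (u - q u) (lineHomotopy q t v) := by
  have hpull : HasFDerivAt (fun y => τ (lineHomotopy q t y))
      (fderiv ℝ τ (lineHomotopy q t z) ∘L lineHomotopy q t) z :=
    HasFDerivAt.comp z (g := τ) hτ.hasFDerivAt (lineHomotopy q t).hasFDerivAt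
  have hintegrand : HasFDerivAt (homotopyIntegrand q τ · t) _ z :=
    (hpull.clm_apply ((hasFDerivAt_id z).sub q.hasFDerivAt)).clm_comp
      (hasFDerivAt_const (lineHomotopy q t) z)
  rw [hintegrand.fderiv]
  simp [add_comm]

theorem hasDerivAt_lineHomotopy_pullback (hτ : DifferentiableAt ℝ τ (lineHomotopy q t z))
    (u v : E) :
    HasDerivAt (fun t => τ (lineHomotopy q t z) (lineHomotopy q t u) (lineHomotopy q t v))
      (fderiv ℝ τ (lineHomotopy q t z) (z - q z) (lineHomotopy q t u) (lineHomotopy q t v)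
        + τ (lineHomotopy q t z) (u - q u) (lineHomotopy q t v)
        + τ (lineHomotopy q t z) (lineHomotopy q t u) (v - q v)) t := by
  have hpath := hasDerivAt_lineHomotopy_apply q t
  have hform : HasDerivAt (fun t => τ (lineHomotopy q t z))
      (fderiv ℝ τ (lineHomotopy q t z) (z - q z)) t :=
    HasFDerivAt.comp_hasDerivAt t (l := τ) hτ.hasFDerivAt (hpath z)
  refine ((hform.clm_apply (hpath u)).clm_apply (hpath v)).congr_deriv ?_
  simp only [add_apply]

theorem fderiv_apply_self_eq_zero_of_alternating {y : E} (hτ : DifferentiableAt ℝ τ y)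
    (halt : ∀ᶠ x in 𝓝 y, ∀ u, τ x u u = 0) (w u : E) : fderiv ℝ τ y w u u = 0 := by
  have hzero : HasFDerivAt (fun x => τ x u u) (0 : E →L[ℝ] G) y :=
    (hasFDerivAt_const 0 y).congr_of_eventuallyEq (halt.mono fun x hx => hx u)
  have happ := (hτ.hasFDerivAt.clm_apply (hasFDerivAt_const u y)).clm_apply
    (hasFDerivAt_const u y)
  simpa using DFunLike.congr_fun (happ.unique hzero) w

theorem hasDerivAt_lineHomotopy_pullback_of_closed
    (hτ : DifferentiableAt ℝ τ (lineHomotopy q t z))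
    (halt : ∀ᶠ y in 𝓝 (lineHomotopy q t z), ∀ u, τ y u u = 0)
    (hclosed : ∀ u v w, fderiv ℝ τ (lineHomotopy q t z) u v w
      + fderiv ℝ τ (lineHomotopy q t z) v w u + fderiv ℝ τ (lineHomotopy q t z) w u v = 0)
    (u v : E) :
    HasDerivAt (fun t => τ (lineHomotopy q t z) (lineHomotopy q t u) (lineHomotopy q t v))
      (fderiv ℝ (homotopyIntegrand q τ · t) z u v
        - fderiv ℝ (homotopyIntegrand q τ · t) z v u) t := by
  refine (hasDerivAt_lineHomotopy_pullback hτ u v).congr_deriv ?_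
  rw [fderiv_homotopyIntegrand_apply hτ, fderiv_homotopyIntegrand_apply hτ]
  have hskew : -τ (lineHomotopy q t z) (v - q v) (lineHomotopy q t u) =
      τ (lineHomotopy q t z) (lineHomotopy q t u) (v - q v) :=
    LinearMap.IsAlt.neg (B := (τ (lineHomotopy q t z)).toLinearMap₁₂) halt.self_of_nhds _ _
  have hderivskew : -fderiv ℝ τ (lineHomotopy q t z) (lineHomotopy q t u) (z - q z)
      (lineHomotopy q t v) =
        fderiv ℝ τ (lineHomotopy q t z) (lineHomotopy q t u) (lineHomotopy q t v) (z - q z) :=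
    LinearMap.IsAlt.neg
      (B := (fderiv ℝ τ (lineHomotopy q t z) (lineHomotopy q t u)).toLinearMap₁₂)
      (fderiv_apply_self_eq_zero_of_alternating hτ halt _) _ _
  linear_combination (norm := abel)
    hclosed (z - q z) (lineHomotopy q t u) (lineHomotopy q t v) - hskew + hderivskew

theorem isOpen_setOf_lineHomotopy_mem {W : Set E} (hW : IsOpen W) :
    IsOpen {p : E × ℝ | lineHomotopy q p.2 p.1 ∈ W} :=
  hW.preimage <| ((contDiff_lineHomotopy q (n := 0)).continuous.comp continuous_snd).clm_apply
    continuous_fst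

section Starlike

variable [CompleteSpace G] {W : Set E}

theorem contDiffOn_homotopyOperator {n : ℕ∞} (hW : IsOpen W)
    (hstar : ∀ z ∈ W, ∀ t ∈ Icc (0 : ℝ) 1, lineHomotopy q t z ∈ W) (hτ : ContDiffOn ℝ n τ W) :
    ContDiffOn ℝ n (homotopyOperator q τ) W :=
  contDiffOn_intervalIntegral hW (isOpen_setOf_lineHomotopy_mem hW)
    (fun p hp => hstar p.1 hp.1 p.2 (uIcc_of_le (zero_le_one' ℝ) ▸ hp.2))
    (contDiffOn_homotopyIntegrand hτ)

theorem fderiv_homotopyOperator_sub_swap (hW : IsOpen W)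
    (hstar : ∀ z ∈ W, ∀ t ∈ Icc (0 : ℝ) 1, lineHomotopy q t z ∈ W) (hτ : ContDiffOn ℝ 1 τ W)
    (halt : ∀ z ∈ W, ∀ u, τ z u u = 0)
    (hclosed : ∀ z ∈ W, ∀ u v w,
      fderiv ℝ τ z u v w + fderiv ℝ τ z v w u + fderiv ℝ τ z w u v = 0)
    (hz : z ∈ W) (u v : E) :
    fderiv ℝ (homotopyOperator q τ) z u v - fderiv ℝ (homotopyOperator q τ) z v u =
      τ z u v - τ (q z) (q u) (q v) := by
  have hU := isOpen_setOf_lineHomotopy_mem (q := q) hW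
  have hmem : W ×ˢ [[(0 : ℝ), 1]] ⊆ {p | lineHomotopy q p.2 p.1 ∈ W} := fun p hp =>
    hstar p.1 hp.1 p.2 (uIcc_of_le (zero_le_one' ℝ) ▸ hp.2)
  have hF := contDiffOn_homotopyIntegrand (q := q) hτ
  let F' (t : ℝ) : E →L[ℝ] E →L[ℝ] G := fderiv ℝ (homotopyIntegrand q τ · t) z
  have hF' : ContinuousOn F' [[0, 1]] :=
    ((continuousOn_fderiv_slice hU hF).mono hmem).uncurry_left z hz
  have hderiv : ∀ t ∈ [[(0 : ℝ), 1]], HasDerivAt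
      (fun t => τ (lineHomotopy q t z) (lineHomotopy q t u) (lineHomotopy q t v))
      (F' t u v - F' t v u) t := fun t ht =>
    have hzt : lineHomotopy q t z ∈ W := hmem (mk_mem_prod hz ht)
    have hnear : W ∈ 𝓝 (lineHomotopy q t z) := hW.mem_nhds hzt
    hasDerivAt_lineHomotopy_pullback_of_closed
      ((hτ.differentiableOn one_ne_zero).differentiableAt hnear)
      (eventually_of_mem hnear halt) (hclosed _ hzt) u v
  have hint : IntervalIntegrable (fun t => F' t u v - F' t v u) volume 0 1 :=
    ContinuousOn.intervalIntegrable (by fun_prop)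
  have hσ : fderiv ℝ (homotopyOperator q τ) z = ∫ t in (0 : ℝ)..1, F' t :=
    (hasFDerivAt_intervalIntegral_of_contDiffOn hW hU hmem hF hz).fderiv
  rw [hσ, intervalIntegral_apply_sub_swap hF',
    intervalIntegral.integral_eq_sub_of_hasDerivAt hderiv hint]
  simp only [lineHomotopy_zero, lineHomotopy_one, ContinuousLinearMap.id_apply]

end Starlike

end HomotopyOperator

section RelativePoincare

variable {X Y G : Type*} [NormedAddCommGroup X] [NormedSpace ℝ X] [NormedAddCommGroup Y]
  [NormedSpace ℝ Y] [NormedAddCommGroup G] [NormedSpace ℝ G]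

variable (X Y) in
/-- The linear projection `(x, y) ↦ (0, y)` of `X × Y` onto the subspace `x = 0`. -/
def sndProjection : X × Y →L[ℝ] X × Y :=
  .inr ℝ X Y ∘L .snd ℝ X Y

theorem sndProjection_apply (z : X × Y) : sndProjection X Y z = (0, z.2) :=
  rfl

theorem norm_sndProjection_le : ‖sndProjection X Y‖ ≤ 1 :=
  ContinuousLinearMap.opNorm_le_bound _ zero_le_one fun z => by
    simpa [sndProjection_apply] using norm_snd_le z

theorem norm_sub_sndProjection_apply (z : X × Y) : ‖z - sndProjection X Y z‖ = ‖z.1‖ := by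
  simp [sndProjection_apply, Prod.norm_def]

theorem lineHomotopy_sndProjection_apply (t : ℝ) (z : X × Y) :
    lineHomotopy (sndProjection X Y) t z = (t • z.1, z.2) := by
  ext <;> simp [lineHomotopy_apply, sndProjection_apply, lineMap_apply_module, ← add_smul]

theorem mul_norm_smul_rpow_le {x : X} {t α C : ℝ} (ht : t ∈ Icc (0 : ℝ) 1) (hα : 0 ≤ α)
    (hC : 0 ≤ C * ‖x‖ ^ α) : C * ‖t • x‖ ^ α ≤ C * ‖x‖ ^ α := by
  rw [norm_smul, Real.norm_of_nonneg ht.1, Real.mul_rpow ht.1 (norm_nonneg x), mul_left_comm]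
  exact mul_le_of_le_one_left hC (Real.rpow_le_one ht.1 ht.2 hα)

theorem relative_poincare_lemma_general [CompleteSpace G] {n : ℕ∞} (hn : 1 ≤ n) {W : Set (X × Y)}
    (hW : IsOpen W) (hstar : ∀ z ∈ W, ∀ t ∈ Icc (0 : ℝ) 1, (t • z.1, z.2) ∈ W)
    {τ : X × Y → X × Y →L[ℝ] X × Y →L[ℝ] G} (hsm : ContDiffOn ℝ n τ W)
    (halt : ∀ z ∈ W, ∀ u, τ z u u = 0)
    (hclosed : ∀ z ∈ W, ∀ u v w,
      fderiv ℝ τ z u v w + fderiv ℝ τ z v w u + fderiv ℝ τ z w u v = 0)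
    {α C : ℝ} (hα : 0 < α) (hbound : ∀ z ∈ W, ‖τ z‖ ≤ C * ‖z.1‖ ^ α) :
    ∃ σ : X × Y → X × Y →L[ℝ] G, ContDiffOn ℝ n σ W ∧
      (∀ z ∈ W, ∀ u v, fderiv ℝ σ z u v - fderiv ℝ σ z v u = τ z u v) ∧
      ∀ z ∈ W, ‖σ z‖ ≤ C * ‖z.1‖ ^ (α + 1) := by
  have hline : ∀ z ∈ W, ∀ t ∈ Icc (0 : ℝ) 1, lineHomotopy (sndProjection X Y) t z ∈ W :=
    fun z hz t ht => lineHomotopy_sndProjection_apply t z ▸ hstar z hz t ht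
  refine ⟨homotopyOperator (sndProjection X Y) τ, contDiffOn_homotopyOperator hW hline hsm,
    fun z hz u v => ?_, fun z hz => ?_⟩
  · have hmem : (0, z.2) ∈ W := by simpa using hstar z hz 0 unitInterval.zero_mem
    have hnorm : ‖τ (0, z.2)‖ ≤ 0 := by simpa [Real.zero_rpow hα.ne'] using hbound _ hmem
    have hzero : τ (0, z.2) = 0 := (norm_le_zero_iff (a := τ (0, z.2))).1 hnorm
    rw [fderiv_homotopyOperator_sub_swap hW hline (hsm.of_le (mod_cast hn)) halt hclosed hz,
      sndProjection_apply, hzero]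
    simp
  · have hpath : ∀ t ∈ Icc (0 : ℝ) 1,
        ‖τ (lineHomotopy (sndProjection X Y) t z)‖ ≤ C * ‖z.1‖ ^ α := fun t ht => by
      refine (hbound _ (hline z hz t ht)).trans ?_
      rw [lineHomotopy_sndProjection_apply]
      exact mul_norm_smul_rpow_le ht hα.le ((norm_nonneg (τ z)).trans (hbound z hz))
    calc ‖homotopyOperator (sndProjection X Y) τ z‖
        ≤ C * ‖z.1‖ ^ α * ‖z - sndProjection X Y z‖ :=
          norm_homotopyOperator_le (q := sndProjection X Y) norm_sndProjection_le hpath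
      _ = C * ‖z.1‖ ^ (α + 1) := by
          rw [norm_sub_sndProjection_apply, mul_assoc,
            Real.rpow_add_one' (norm_nonneg _) (by positivity)]

end RelativePoincare

/-- Relative Poincaré lemma with vanishing order: on a neighborhood of `0` in
`ℝ^d = ℝ^k_x × ℝ^{d−k}_y`, star-shaped in the `x`-variable, every smooth closed
2-form `τ` with `‖τ(x,y)‖ ≤ C|x|^α` is the exterior derivative of a smooth 1-form
`σ` with `‖σ(x,y)‖ ≤ C'|x|^{α+1}`. -/
theorem relative_poincare_lemma {k m : ℕ}
    (W : Set ((Fin k → ℝ) × (Fin m → ℝ))) (hW : IsOpen W)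
    (h0 : (0 : (Fin k → ℝ) × (Fin m → ℝ)) ∈ W)
    (hstar : ∀ z ∈ W, ∀ t : ℝ, t ∈ Set.Icc (0 : ℝ) 1 →
      ((t • z.1, z.2) : (Fin k → ℝ) × (Fin m → ℝ)) ∈ W)
    (τ : ((Fin k → ℝ) × (Fin m → ℝ)) →
      (((Fin k → ℝ) × (Fin m → ℝ)) →L[ℝ] ((Fin k → ℝ) × (Fin m → ℝ)) →L[ℝ] ℝ))
    (hsm : ContDiffOn ℝ (⊤ : ℕ∞) τ W)
    (halt : ∀ z ∈ W, ∀ u, τ z u u = 0)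
    (hclosed : ∀ z ∈ W, ∀ u v w : (Fin k → ℝ) × (Fin m → ℝ),
      fderiv ℝ τ z u v w + fderiv ℝ τ z v w u + fderiv ℝ τ z w u v = 0)
    (α : ℝ) (hα : 1 ≤ α) (C : ℝ) (hC : 0 < C)
    (hbound : ∀ z ∈ W, ‖τ z‖ ≤ C * ‖z.1‖ ^ α) :
    ∃ (W' : Set ((Fin k → ℝ) × (Fin m → ℝ)))
      (σ : ((Fin k → ℝ) × (Fin m → ℝ)) → (((Fin k → ℝ) × (Fin m → ℝ)) →L[ℝ] ℝ))
      (C' : ℝ),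
      IsOpen W' ∧ (0 : (Fin k → ℝ) × (Fin m → ℝ)) ∈ W' ∧ W' ⊆ W ∧ 0 < C' ∧
      ContDiffOn ℝ (⊤ : ℕ∞) σ W' ∧
      (∀ z ∈ W', ∀ u v : (Fin k → ℝ) × (Fin m → ℝ),
        fderiv ℝ σ z u v - fderiv ℝ σ z v u = τ z u v) ∧
      (∀ z ∈ W', ‖σ z‖ ≤ C' * ‖z.1‖ ^ (α + 1)) := by
  obtain ⟨σ, hσ, hdσ, hnorm⟩ := relative_poincare_lemma_general (mod_cast le_top) hW hstar hsm halt
    hclosed (one_pos.trans_le hα) hbound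
  exact ⟨W, σ, C, hW, h0, subset_rfl, hC, hσ, hdσ, hnorm⟩
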